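/- The commutator subgroup of the Basilica group absorbs pairs: for all g, h in the commutator subgroup ⁅B, B⁆ of the Basilica group B, the permutation pair g h also belongs to ⁅B, B⁆ (i.e. ⁅B,B⁆ × ⁅B,B⁆, embedded via pair, is contained in ⁅B,B⁆). -/

import Mathlib

/-!
Write `(g, h)` for `pair g h`. The recursion gives `a = (1, b)` and `b ^ 2 = (a, a)`, so
`⁅b ^ 2, a⁆ = (1, ⁅a, b⁆)` lies in `⁅B, B⁆`. Conjugating `(1, k)` by `a` and by `b ^ 2` conjugates
`k` by `b` and by `a`, so the subgroup of all `k` with `(1, k) ∈ ⁅B, B⁆` is normalized by `B`. As it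
contains the commutator of the two generators, it contains `⁅B, B⁆`. Conjugation by `b` carries
`(k, 1)` to `(1, k)`, which settles the other coordinate, and `(g, h) = (g, 1) (1, h)`.
-/

namespace Basilica

mutual
  /-- Underlying map of the Basilica generator `a`. -/
  def aF : List Bool → List Bool
    | [] => []
    | false :: w => false :: w
    | true :: w => true :: bF w
  /-- Underlying map of the Basilica generator `b`. -/
  def bF : List Bool → List Bool
    | [] => []
    | false :: w => true :: w
    | true :: w => false :: aF w
end

mutual
  /-- Inverse of `aF`. -/
  def aI : List Bool → List Bool
    | [] => []
    | false :: w => false :: w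
    | true :: w => true :: bI w
  /-- Inverse of `bF`. -/
  def bI : List Bool → List Bool
    | [] => []
    | false :: w => true :: aI w
    | true :: w => false :: w
end

theorem basilica_inv : ∀ w : List Bool,
    aI (aF w) = w ∧ bI (bF w) = w ∧ aF (aI w) = w ∧ bF (bI w) = w := by
  intro w
  induction w with
  | nil => simp [aF, bF, aI, bI]
  | cons x w ih =>
    cases x <;>
      simp [aF, bF, aI, bI, ih.1, ih.2.1, ih.2.2.1, ih.2.2.2]

/-- The Basilica generator `a` as a permutation of the binary tree `List Bool`:
`a [] = []`, `a (false :: w) = false :: w`, `a (true :: w) = true :: b w`. -/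
def a : Equiv.Perm (List Bool) :=
  ⟨aF, aI, fun w => (basilica_inv w).1, fun w => (basilica_inv w).2.2.1⟩

/-- The Basilica generator `b` as a permutation of the binary tree `List Bool`:
`b [] = []`, `b (false :: w) = true :: w`, `b (true :: w) = false :: a w`. -/
def b : Equiv.Perm (List Bool) :=
  ⟨bF, bI, fun w => (basilica_inv w).2.1, fun w => (basilica_inv w).2.2.2⟩

/-- Underlying map of the pair `(g, h)` acting on the two subtrees. -/
def pairF (g h : List Bool → List Bool) : List Bool → List Bool
  | [] => []
  | false :: w => false :: g w
  | true :: w => true :: h w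

/-- The permutation of `List Bool` acting as `g` on the subtree below `false`
and as `h` on the subtree below `true`, fixing the root. -/
def pair (g h : Equiv.Perm (List Bool)) : Equiv.Perm (List Bool) :=
  ⟨pairF g h, pairF g.symm h.symm,
    fun w => by cases w with
      | nil => rfl
      | cons x w => cases x <;> simp [pairF],
    fun w => by cases w with
      | nil => rfl
      | cons x w => cases x <;> simp [pairF]⟩

/-- The Basilica group: the subgroup of `Equiv.Perm (List Bool)` generated by `a` and `b`. -/
def B : Subgroup (Equiv.Perm (List Bool)) := Subgroup.closure {a, b}

end Basilica

namespace Basilica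

open Subgroup
open scoped commutatorElement

section CommutatorClosure

variable {G : Type*} [Group G] {K : Subgroup G} {S T : Set G}

theorem commutatorElement_mem_comm {x y : G} : ⁅x, y⁆ ∈ K ↔ ⁅y, x⁆ ∈ K := by
  rw [← commutatorElement_inv, inv_mem_iff]

theorem commutatorElement_mem_of_mem_closure_left {x y : G}
    (hS : S ⊆ normalizer (K : Set G)) (h : ∀ s ∈ S, ⁅s, y⁆ ∈ K) (hx : x ∈ closure S) :
    ⁅x, y⁆ ∈ K := by
  have conj_mem {z k : G} (hz : z ∈ closure S) (hk : k ∈ K) : z * k * z⁻¹ ∈ K :=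
    le_normalizer_iff.1 ((closure_le _).2 hS) z hz k hk
  induction hx using closure_induction with
  | mem s hs => exact h s hs
  | one => simp only [commutatorElement_one_left, one_mem]
  | mul u v hu _ ihu ihv =>
    rw [commutatorElement_mul_left_eq_conj_mul]
    exact mul_mem (conj_mem hu ihv) ihu
  | inv u hu ih =>
    rw [commutatorElement_inv_left, ← commutatorElement_inv]
    simpa only [inv_inv] using conj_mem (inv_mem hu) (inv_mem ih)

theorem commutator_closure_le (hS : S ⊆ normalizer (K : Set G))
    (hT : T ⊆ normalizer (K : Set G)) (h : ∀ s ∈ S, ∀ t ∈ T, ⁅s, t⁆ ∈ K) :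
    ⁅closure S, closure T⁆ ≤ K := by
  refine commutator_le.2 fun x hx y hy => ?_
  refine commutatorElement_mem_of_mem_closure_left hS (fun s hs => ?_) hx
  rw [commutatorElement_mem_comm]
  exact commutatorElement_mem_of_mem_closure_left hT
    (fun t ht => commutatorElement_mem_comm.1 (h s hs t ht)) hy

theorem commutator_closure_pair_le {x y : G} (hx : x ∈ normalizer (K : Set G))
    (hy : y ∈ normalizer (K : Set G)) (hxy : ⁅x, y⁆ ∈ K) :
    ⁅closure {x, y}, closure {x, y}⁆ ≤ K := by
  have h_subset : {x, y} ⊆ (normalizer (K : Set G) : Set G) := Set.pair_subset hx hy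
  refine commutator_closure_le h_subset h_subset ?_
  rintro s (rfl | rfl) t (rfl | rfl)
  · simp only [commutatorElement_self, one_mem]
  · exact hxy
  · exact commutatorElement_mem_comm.1 hxy
  · simp only [commutatorElement_self, one_mem]

end CommutatorClosure

theorem pair_mul (g h g' h' : Equiv.Perm (List Bool)) :
    pair g h * pair g' h' = pair (g * g') (h * h') := by
  ext1 w
  rcases w with _ | ⟨_ | _, w⟩ <;> rfl

theorem pair_inv (g h : Equiv.Perm (List Bool)) : (pair g h)⁻¹ = pair g⁻¹ h⁻¹ := rfl

/-- The embedding `k ↦ (1, k)` of the permutations of the subtree below `true`. -/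
def pairRight : Equiv.Perm (List Bool) →* Equiv.Perm (List Bool) :=
  MonoidHom.mk' (pair 1) fun g h => by rw [pair_mul, one_mul]

theorem mem_normalizer_comap_pairRight {H : Subgroup (Equiv.Perm (List Bool))}
    {g h : Equiv.Perm (List Bool)}
    (hgh : pair g h ∈ normalizer (H : Set (Equiv.Perm (List Bool)))) :
    h ∈ normalizer (H.comap pairRight : Set (Equiv.Perm (List Bool))) := by
  refine mem_normalizer_iff.2 fun k => ?_
  have h_conj : pair g h * pairRight k * (pair g h)⁻¹ = pairRight (h * k * h⁻¹) := by
    simp [pairRight, pair_mul, pair_inv]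
  rw [mem_comap, mem_comap, ← h_conj]
  exact mem_normalizer_iff.1 hgh _

theorem a_eq_pair : a = pair 1 b := by
  ext1 w
  rcases w with _ | ⟨_ | _, w⟩ <;> simp [a, b, pair, pairF, aF]

theorem b_sq_eq_pair : b ^ 2 = pair a a := by
  ext1 w
  rcases w with _ | ⟨_ | _, w⟩ <;> simp [sq, a, b, pair, pairF, bF]

theorem b_conj_pair (g h : Equiv.Perm (List Bool)) :
    b * pair g h * b⁻¹ = pair (a * h * a⁻¹) g := by
  rw [mul_inv_eq_iff_eq_mul]
  ext1 w
  rcases w with _ | ⟨_ | _, w⟩ <;> simp [a, b, pair, pairF, bF, basilica_inv]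

theorem a_mem : a ∈ B := subset_closure (Set.mem_insert a {b})

theorem b_mem : b ∈ B := subset_closure (Set.mem_insert_of_mem a rfl)

theorem le_normalizer_commutator_B :
    B ≤ normalizer (⁅B, B⁆ : Subgroup (Equiv.Perm (List Bool))) :=
  normalizer_commutator_ge_left B B

theorem pairRight_commutator_a_b : pairRight ⁅a, b⁆ = ⁅b ^ 2, a⁆ :=
  calc
    pairRight ⁅a, b⁆ = ⁅pair a a, pair 1 b⁆ := by
      simp [pairRight, commutatorElement_def, pair_mul, pair_inv]
    _ = ⁅b ^ 2, a⁆ := by rw [← b_sq_eq_pair, ← a_eq_pair]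

theorem commutator_le_comap_pairRight : ⁅B, B⁆ ≤ ⁅B, B⁆.comap pairRight := by
  have ha : a ∈ normalizer (⁅B, B⁆.comap pairRight : Set _) :=
    mem_normalizer_comap_pairRight (b_sq_eq_pair ▸ le_normalizer_commutator_B (pow_mem b_mem 2))
  have hb : b ∈ normalizer (⁅B, B⁆.comap pairRight : Set _) :=
    mem_normalizer_comap_pairRight (a_eq_pair ▸ le_normalizer_commutator_B a_mem)
  have hab : ⁅a, b⁆ ∈ ⁅B, B⁆.comap pairRight := by
    rw [mem_comap, pairRight_commutator_a_b]
    exact commutator_mem_commutator (pow_mem b_mem 2) a_mem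
  exact commutator_closure_pair_le ha hb hab

end Basilica

open Basilica in
/-- The commutator subgroup of the Basilica group absorbs pairs:
if `g, h ∈ ⁅B, B⁆` then `pair g h ∈ ⁅B, B⁆`. -/
theorem basilica_commutator_pair (g h : Equiv.Perm (List Bool))
    (hg : g ∈ ⁅B, B⁆) (hh : h ∈ ⁅B, B⁆) :
    pair g h ∈ ⁅B, B⁆ := by
  have hr (k) (hk : k ∈ ⁅B, B⁆) : pair 1 k ∈ ⁅B, B⁆ := commutator_le_comap_pairRight hk
  have hl : pair g 1 ∈ ⁅B, B⁆ := by
    have h_conj : b * pair g 1 * b⁻¹ = pair 1 g := by simp [b_conj_pair]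
    exact (Subgroup.mem_normalizer_iff.1 (le_normalizer_commutator_B b_mem) _).2 (h_conj ▸ hr g hg)
  simpa [pair_mul] using mul_mem hl (hr h hh)
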